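/- Let l > 0 satisfy l·tanh(l) ≠ 1. Let u : ℝ² → ℝ be a C² function, 2π-periodic in its first variable x, satisfying ∂²u/∂x² + ∂²u/∂s² + 2·sech²(s)·u = 0 for all (x,s) with −l ≤ s ≤ l, and u(x, l) = u(x, −l) = 0 for all x ∈ ℝ. Then u(x,s) = 0 for all (x,s) with −l ≤ s ≤ l. -/

import Mathlib

/-!
Expanding `u(·, s)` in a Fourier series separates the variables: the `n`-th coefficient solves
`a'' = (n² - 2 sech² s) a` with Dirichlet conditions at `±l`. For `n ≠ 0` the equation is compared
with `ψ'' = (1 - 2 sech² s) ψ`, which has the positive solution `ψ = sech`. For `n = 0` the general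
solution is known: `tanh s` and `s tanh s - 1` form a fundamental system, and the only obstruction
to solving the boundary value problem uniquely is `l tanh l = 1`. Hence all coefficients vanish.
-/

open Set Function

section SchrodingerEquation

variable {E : Type*} [NormedAddCommGroup E] {a b s : ℝ}

section NormedSpace

variable [NormedSpace ℝ E] {V U : ℝ → ℝ} {y y' z z' : ℝ → ℝ} {f f' : ℝ → E} {D : Set ℝ}

/-- `f` solves the one-dimensional Schrödinger equation `f'' = V f` on `D`, with derivative `f'`.
Derivatives are taken within `D`, hence are one-sided at the ends of an interval. -/
structure IsSchrodingerSolutionOn (V : ℝ → ℝ) (f f' : ℝ → E) (D : Set ℝ) : Prop where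
  hasDerivWithinAt : ∀ s ∈ D, HasDerivWithinAt f (f' s) D s
  hasDerivWithinAt_deriv : ∀ s ∈ D, HasDerivWithinAt f' (V s • f s) D s

/-- The Wronskian `y f' - y' f` of a scalar function `y` and a vector-valued function `f` with
derivatives `y'` and `f'`. -/
def wronskian (y y' : ℝ → ℝ) (f f' : ℝ → E) (s : ℝ) : E :=
  y s • f' s - y' s • f s

lemma IsSchrodingerSolutionOn.hasDerivWithinAt_wronskian
    (hy : IsSchrodingerSolutionOn U y y' D) (hf : IsSchrodingerSolutionOn V f f' D) (hs : s ∈ D) :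
    HasDerivWithinAt (wronskian y y' f f') (((V s - U s) * y s) • f s) D s := by
  refine (((hy.hasDerivWithinAt s hs).smul (hf.hasDerivWithinAt_deriv s hs)).sub
    ((hy.hasDerivWithinAt_deriv s hs).smul (hf.hasDerivWithinAt s hs))).congr_deriv ?_
  rw [smul_eq_mul]
  module

lemma eq_left_of_hasDerivWithinAt_zero (hf : ∀ s ∈ Icc a b, HasDerivWithinAt f 0 (Icc a b) s)
    (hs : s ∈ Icc a b) : f s = f a :=
  constant_of_derivWithin_zero (fun t ht => (hf t ht).differentiableWithinAt)
    (fun t ht => (hf t (Ico_subset_Icc_self ht)).derivWithin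
      (uniqueDiffOn_Icc (ht.1.trans_lt ht.2) t (Ico_subset_Icc_self ht))) s hs

lemma IsSchrodingerSolutionOn.wronskian_eq_left (hy : IsSchrodingerSolutionOn V y y' (Icc a b))
    (hf : IsSchrodingerSolutionOn V f f' (Icc a b)) (hs : s ∈ Icc a b) :
    wronskian y y' f f' s = wronskian y y' f f' a :=
  eq_left_of_hasDerivWithinAt_zero
    (fun t ht => by simpa using hy.hasDerivWithinAt_wronskian hf ht) hs

theorem IsSchrodingerSolutionOn.eq_zero_of_fundamental_system
    (hy : IsSchrodingerSolutionOn V y y' (Icc a b)) (hz : IsSchrodingerSolutionOn V z z' (Icc a b))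
    (hyz : wronskian y y' z z' a ≠ 0) (hdet : y a * z b - y b * z a ≠ 0)
    (hf : IsSchrodingerSolutionOn V f f' (Icc a b)) (hfa : f a = 0) (hfb : f b = 0)
    (hs : s ∈ Icc a b) : f s = 0 := by
  have hb : b ∈ Icc a b := right_mem_Icc.2 (hs.1.trans hs.2)
  have hyb : y b • f' b = y a • f' a := by
    simpa [wronskian, hfa, hfb] using hy.wronskian_eq_left hf hb
  have hzb : z b • f' b = z a • f' a := by
    simpa [wronskian, hfa, hfb] using hz.wronskian_eq_left hf hb
  have hf'a : f' a = 0 := by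
    refine (smul_eq_zero.1 ?_).resolve_left hdet
    calc (y a * z b - y b * z a) • f' a = z b • (y a • f' a) - y b • (z a • f' a) := by module
      _ = 0 := by rw [← hyb, ← hzb]; module
  have hys : wronskian y y' f f' s = 0 := by
    rw [hy.wronskian_eq_left hf hs]; simp [wronskian, hfa, hf'a]
  have hzs : wronskian z z' f f' s = 0 := by
    rw [hz.wronskian_eq_left hf hs]; simp [wronskian, hfa, hf'a]
  rw [← hy.wronskian_eq_left hz hs] at hyz
  refine (smul_eq_zero.1 ?_).resolve_left hyz
  calc wronskian y y' z z' s • f s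
      = z s • wronskian y y' f f' s - y s • wronskian z z' f f' s := by
        simp only [wronskian, smul_eq_mul]; module
    _ = 0 := by rw [hys, hzs, smul_zero, smul_zero, sub_zero]

lemma hasDerivWithinAt_inv_smul (hy : HasDerivWithinAt y (y' s) D s)
    (hf : HasDerivWithinAt f (f' s) D s) (hs : y s ≠ 0) :
    HasDerivWithinAt (fun t => (y t)⁻¹ • f t) ((y s ^ 2)⁻¹ • wronskian y y' f f' s) D s := by
  refine ((hy.inv hs).smul hf).congr_deriv ?_
  simp only [wronskian, Pi.inv_apply]
  match_scalars <;> field_simp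

end NormedSpace

lemma eq_zero_of_hasDerivWithinAt_nonneg_of_eq {g g' : ℝ → ℝ} (hab : a < b)
    (hg : ∀ s ∈ Icc a b, HasDerivWithinAt g (g' s) (Icc a b) s) (hg' : ∀ s ∈ Icc a b, 0 ≤ g' s)
    (hgab : g a = g b) (hs : s ∈ Icc a b) : g' s = 0 := by
  have hmono : MonotoneOn g (Icc a b) :=
    monotoneOn_of_hasDerivWithinAt_nonneg (convex_Icc a b)
      (fun t ht => (hg t ht).continuousWithinAt)
      (fun t ht => (hg t (interior_subset ht)).mono interior_subset)
      (fun t ht => hg' t (interior_subset ht))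
  have hconst : ∀ t ∈ Icc a b, g t = g a := fun t ht =>
    le_antisymm ((hmono ht (right_mem_Icc.2 hab.le) ht.2).trans_eq hgab.symm)
      (hmono (left_mem_Icc.2 hab.le) ht ht.1)
  exact (uniqueDiffOn_Icc hab s hs).eq_deriv _ (hg s hs)
    ((hasDerivWithinAt_const s _ (g a)).congr hconst (hconst s hs))

open scoped InnerProductSpace in
/-- Sturm comparison. With `W = ψ f' - ψ' f` and `g = f / ψ` one has `g' = W / ψ²` and
`W' = (V - U) ψ² g`, so `⟪g, W⟫` is nondecreasing; it vanishes at both ends. -/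
theorem IsSchrodingerSolutionOn.eq_zero_of_pos_of_le [InnerProductSpace ℝ E] {U V : ℝ → ℝ}
    {ψ ψ' : ℝ → ℝ} {f f' : ℝ → E} (hψ : IsSchrodingerSolutionOn U ψ ψ' (Icc a b))
    (hψpos : ∀ s ∈ Icc a b, 0 < ψ s) (hUV : ∀ s ∈ Icc a b, U s ≤ V s)
    (hf : IsSchrodingerSolutionOn V f f' (Icc a b)) (hfa : f a = 0) (hfb : f b = 0)
    (hs : s ∈ Icc a b) : f s = 0 := by
  obtain rfl | hab := (hs.1.trans hs.2).eq_or_lt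
  · rwa [← le_antisymm hs.1 hs.2]
  set W := wronskian ψ ψ' f f'
  have hg : ∀ t ∈ Icc a b,
      HasDerivWithinAt (fun t => (ψ t)⁻¹ • f t) ((ψ t ^ 2)⁻¹ • W t) (Icc a b) t := fun t ht =>
    hasDerivWithinAt_inv_smul (hψ.hasDerivWithinAt t ht) (hf.hasDerivWithinAt t ht)
      (hψpos t ht).ne'
  have hq : ∀ t ∈ Icc a b, HasDerivWithinAt (fun t => ⟪(ψ t)⁻¹ • f t, W t⟫_ℝ)
      ((V t - U t) * ‖f t‖ ^ 2 + (ψ t ^ 2)⁻¹ * ‖W t‖ ^ 2) (Icc a b) t := by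
    intro t ht
    have hWt : HasDerivWithinAt W (((V t - U t) * ψ t) • f t) (Icc a b) t :=
      hψ.hasDerivWithinAt_wronskian hf ht
    refine ((hg t ht).inner ℝ hWt).congr_deriv ?_
    simp only [real_inner_smul_left, real_inner_smul_right, real_inner_self_eq_norm_sq]
    field_simp [(hψpos t ht).ne']
  have hVU : ∀ t ∈ Icc a b, 0 ≤ (V t - U t) * ‖f t‖ ^ 2 := fun t ht =>
    mul_nonneg (sub_nonneg.2 (hUV t ht)) (sq_nonneg _)
  have hW : ∀ t ∈ Icc a b, W t = 0 := by
    intro t ht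
    have hsum := eq_zero_of_hasDerivWithinAt_nonneg_of_eq hab hq
      (fun r hr => add_nonneg (hVU r hr) (by positivity)) (by simp [hfa, hfb]) ht
    have hzero := ((add_eq_zero_iff_of_nonneg (hVU t ht) (by positivity)).1 hsum).2
    simpa [(hψpos t ht).ne'] using hzero
  have hgs := eq_left_of_hasDerivWithinAt_zero (fun t ht => by simpa [hW t ht] using hg t ht) hs
  simpa [hfa, (hψpos s hs).ne'] using hgs

end SchrodingerEquation

section JacobiModes

variable {D : Set ℝ} {s : ℝ}

lemma hasDerivAt_tanh (s : ℝ) : HasDerivAt Real.tanh ((Real.cosh s)⁻¹ ^ 2) s := by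
  have hc := (Real.cosh_pos s).ne'
  rw [show Real.tanh = Real.sinh / Real.cosh from funext Real.tanh_eq_sinh_div_cosh]
  refine ((Real.hasDerivAt_sinh s).div (Real.hasDerivAt_cosh s) hc).congr_deriv ?_
  field_simp
  linarith [Real.cosh_sq s]

lemma hasDerivAt_inv_cosh (s : ℝ) :
    HasDerivAt (fun t => (Real.cosh t)⁻¹) (-(Real.tanh s * (Real.cosh s)⁻¹)) s := by
  refine ((Real.hasDerivAt_cosh s).inv (Real.cosh_pos s).ne').congr_deriv ?_
  rw [Real.tanh_eq_sinh_div_cosh]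
  field_simp

lemma inv_cosh_sq_eq_one_sub_tanh_sq (s : ℝ) : (Real.cosh s)⁻¹ ^ 2 = 1 - Real.tanh s ^ 2 := by
  have hc := (Real.cosh_pos s).ne'
  rw [Real.tanh_eq_sinh_div_cosh]
  field_simp
  linarith [Real.cosh_sq s]

/-- The potential `k - 2 sech² s` obtained from the Jacobi operator `Δ + 2 sech² s` of the cylinder
on the eigenspace of `-∂ₓ²` with eigenvalue `k`. -/
noncomputable def jacobiPotential (k s : ℝ) : ℝ :=
  k - 2 * (Real.cosh s)⁻¹ ^ 2

lemma isSchrodingerSolutionOn_inv_cosh : IsSchrodingerSolutionOn (jacobiPotential 1)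
    (fun s => (Real.cosh s)⁻¹) (fun s => -(Real.tanh s * (Real.cosh s)⁻¹)) D where
  hasDerivWithinAt s _ := (hasDerivAt_inv_cosh s).hasDerivWithinAt
  hasDerivWithinAt_deriv s _ := by
    refine ((hasDerivAt_tanh s).mul (hasDerivAt_inv_cosh s)).neg.hasDerivWithinAt.congr_deriv ?_
    simp only [jacobiPotential, smul_eq_mul]
    linear_combination (Real.cosh s)⁻¹ * inv_cosh_sq_eq_one_sub_tanh_sq s

lemma isSchrodingerSolutionOn_tanh : IsSchrodingerSolutionOn (jacobiPotential 0)
    Real.tanh (fun s => (Real.cosh s)⁻¹ ^ 2) D where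
  hasDerivWithinAt s _ := (hasDerivAt_tanh s).hasDerivWithinAt
  hasDerivWithinAt_deriv s _ := by
    refine ((hasDerivAt_inv_cosh s).pow 2).hasDerivWithinAt.congr_deriv ?_
    simp only [jacobiPotential, smul_eq_mul]
    ring

lemma isSchrodingerSolutionOn_mul_tanh_sub_one : IsSchrodingerSolutionOn (jacobiPotential 0)
    (fun s => s * Real.tanh s - 1) (fun s => Real.tanh s + s * (Real.cosh s)⁻¹ ^ 2) D where
  hasDerivWithinAt s _ := by
    refine (((hasDerivAt_id s).mul (hasDerivAt_tanh s)).sub_const 1).hasDerivWithinAt.congr_deriv ?_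
    simp only [id, one_mul]
  hasDerivWithinAt_deriv s _ := by
    refine ((hasDerivAt_tanh s).add
      ((hasDerivAt_id s).mul ((hasDerivAt_inv_cosh s).pow 2))).hasDerivWithinAt.congr_deriv ?_
    simp only [jacobiPotential, smul_eq_mul, id, Pi.pow_apply]
    ring

lemma wronskian_tanh_mul_tanh_sub_one (s : ℝ) :
    wronskian Real.tanh (fun s => (Real.cosh s)⁻¹ ^ 2) (fun s => s * Real.tanh s - 1)
      (fun s => Real.tanh s + s * (Real.cosh s)⁻¹ ^ 2) s = 1 := by
  simp only [wronskian, smul_eq_mul]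
  linear_combination inv_cosh_sq_eq_one_sub_tanh_sq s

theorem jacobi_mode_eq_zero_of_one_le {E : Type*} [NormedAddCommGroup E] [InnerProductSpace ℝ E]
    {a b k : ℝ} {f f' : ℝ → E} (hk : 1 ≤ k)
    (hf : IsSchrodingerSolutionOn (jacobiPotential k) f f' (Icc a b))
    (hfa : f a = 0) (hfb : f b = 0) (hs : s ∈ Icc a b) : f s = 0 :=
  isSchrodingerSolutionOn_inv_cosh.eq_zero_of_pos_of_le
    (fun t _ => inv_pos.2 (Real.cosh_pos t)) (fun _ _ => sub_le_sub_right hk _) hf hfa hfb hs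

theorem jacobi_radial_mode_eq_zero {E : Type*} [NormedAddCommGroup E] [NormedSpace ℝ E]
    {l : ℝ} {f f' : ℝ → E} (hl : 0 < l) (hne : l * Real.tanh l ≠ 1)
    (hf : IsSchrodingerSolutionOn (jacobiPotential 0) f f' (Icc (-l) l))
    (hfl : f (-l) = 0) (hfr : f l = 0) (hs : s ∈ Icc (-l) l) : f s = 0 := by
  have htanh : Real.tanh l ≠ 0 := by
    rw [Real.tanh_eq_sinh_div_cosh]
    exact (div_pos (Real.sinh_pos_iff.2 hl) (Real.cosh_pos l)).ne'
  have hdet : Real.tanh (-l) * (l * Real.tanh l - 1) - Real.tanh l * (-l * Real.tanh (-l) - 1)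
      = -2 * Real.tanh l * (l * Real.tanh l - 1) := by
    rw [Real.tanh_neg]; ring
  refine isSchrodingerSolutionOn_tanh.eq_zero_of_fundamental_system
    isSchrodingerSolutionOn_mul_tanh_sub_one ?_ ?_ hf hfl hfr hs
  · rw [wronskian_tanh_mul_tanh_sub_one]
    exact one_ne_zero
  · rw [hdet]
    exact mul_ne_zero (mul_ne_zero (by norm_num) htanh) (sub_ne_zero.2 hne)

theorem jacobi_int_mode_eq_zero {E : Type*} [NormedAddCommGroup E] [InnerProductSpace ℝ E]
    {l : ℝ} {f f' : ℝ → E} (hl : 0 < l) (hne : l * Real.tanh l ≠ 1) (n : ℤ)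
    (hf : IsSchrodingerSolutionOn (jacobiPotential ((n : ℝ) ^ 2)) f f' (Icc (-l) l))
    (hfl : f (-l) = 0) (hfr : f l = 0) (hs : s ∈ Icc (-l) l) : f s = 0 := by
  obtain rfl | hn := eq_or_ne n 0
  · exact jacobi_radial_mode_eq_zero hl hne (by simpa using hf) hfl hfr hs
  · have hk : (1 : ℝ) ≤ (n : ℝ) ^ 2 :=
      mod_cast (one_le_sq_iff_one_le_abs n).2 (Int.one_le_abs hn)
    exact jacobi_mode_eq_zero_of_one_le hk hf hfl hfr hs

end JacobiModes

section SeparationOfVariables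

variable {E : Type*} [NormedAddCommGroup E] [NormedSpace ℝ E] {T : ℝ}

lemma periodic_deriv {f : ℝ → E} (hf : Periodic f T) : Periodic (deriv f) T := fun x => by
  rw [← deriv_comp_add_const, funext hf]

lemma integral_deriv_smul_eq_neg_of_periodic [CompleteSpace E] {f : ℝ → ℝ} {φ : ℝ → E}
    (hf : ContDiff ℝ 1 f) (hφ : ContDiff ℝ 1 φ)
    (hfT : Periodic f T) (hφT : Periodic φ T) :
    ∫ x in 0..T, deriv f x • φ x = -∫ x in 0..T, f x • deriv φ x := by
  rw [intervalIntegral.integral_smul_deriv_eq_deriv_smul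
    (fun x _ => (hf.differentiable one_ne_zero x).hasDerivAt)
    (fun x _ => (hφ.differentiable one_ne_zero x).hasDerivAt)
    (hf.continuous_deriv le_rfl |>.intervalIntegrable _ _)
    (hφ.continuous_deriv le_rfl |>.intervalIntegrable _ _), hfT.eq, hφT.eq]
  simp

lemma integral_iteratedDeriv_two_smul_of_periodic [CompleteSpace E] {f : ℝ → ℝ} {φ : ℝ → E}
    (hf : ContDiff ℝ 2 f) (hφ : ContDiff ℝ 2 φ)
    (hfT : Periodic f T) (hφT : Periodic φ T) :
    ∫ x in 0..T, iteratedDeriv 2 f x • φ x = ∫ x in 0..T, f x • iteratedDeriv 2 φ x := by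
  simp only [iteratedDeriv_succ, iteratedDeriv_zero]
  rw [integral_deriv_smul_eq_neg_of_periodic hf.deriv' (hφ.of_le one_le_two)
      (periodic_deriv hfT) hφT,
    integral_deriv_smul_eq_neg_of_periodic (hf.of_le one_le_two) hφ.deriv' hfT
      (periodic_deriv hφT), neg_neg]

lemma contDiff_uncurry_deriv {X : Type*} [NormedAddCommGroup X] [NormedSpace ℝ X]
    {u : X → ℝ → E} {m n : WithTop ℕ∞} (hu : ContDiff ℝ m (uncurry u)) (hnm : n + 1 ≤ m) :
    ContDiff ℝ n (uncurry fun x => deriv (u x)) :=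
  ContDiff.fderiv_apply (f := fun (p : X × ℝ) s => u p.1 s)
    (hu.comp (contDiff_fst.fst.prodMk contDiff_snd)) contDiff_snd contDiff_const hnm

lemma hasDerivAt_integral_of_continuous_deriv {G G' : ℝ → ℝ → E}
    (hG : ∀ s, Continuous fun x => G x s) (hG' : Continuous (uncurry G'))
    (hderiv : ∀ x s, HasDerivAt (G x) (G' x s) s) (a b s : ℝ) :
    HasDerivAt (fun t => ∫ x in a..b, G x t) (∫ x in a..b, G' x s) s := by
  have hG's : Continuous fun x => G' x s := hG'.comp (by fun_prop : Continuous fun x => (x, s))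
  obtain ⟨C, hC⟩ := (isCompact_uIcc.prod (isCompact_closedBall s 1)).exists_bound_of_continuousOn
    (s := uIcc a b ×ˢ Metric.closedBall s 1) hG'.continuousOn
  exact (intervalIntegral.hasDerivAt_integral_of_dominated_loc_of_deriv_le (bound := fun _ => C)
    (Metric.closedBall_mem_nhds s one_pos)
    (.of_forall fun t => (hG t).aestronglyMeasurable) ((hG s).intervalIntegrable _ _)
    hG's.aestronglyMeasurable
    (.of_forall fun x hx t ht => hC (x, t) ⟨uIoc_subset_uIcc hx, ht⟩) intervalIntegrable_const
    (.of_forall fun x _ t _ => hderiv x t)).2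

lemma hasDerivAt_integral_smul_of_contDiff {u : ℝ → ℝ → ℝ} {φ : ℝ → E}
    (hu : ContDiff ℝ 1 (uncurry u)) (hφ : Continuous φ) (a b s : ℝ) :
    HasDerivAt (fun t => ∫ x in a..b, u x t • φ x) (∫ x in a..b, deriv (u x) s • φ x) s := by
  have hslice : ∀ x, Differentiable ℝ (u x) := fun x =>
    (hu.comp (contDiff_prodMk_right x)).differentiable one_ne_zero
  exact hasDerivAt_integral_of_continuous_deriv (G' := fun x s => deriv (u x) s • φ x)
    (fun t => (hu.continuous.comp (by fun_prop : Continuous fun x => (x, t))).smul hφ)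
    ((contDiff_uncurry_deriv hu (zero_add _).le).continuous.smul (hφ.comp continuous_fst))
    (fun x t => (hslice x t).hasDerivAt.smul_const _) a b s

theorem isSchrodingerSolutionOn_integral_smul [CompleteSpace E] {u : ℝ → ℝ → ℝ} {q : ℝ → ℝ}
    {D : Set ℝ} {k : ℝ} {φ : ℝ → E} (hu : ContDiff ℝ 2 (uncurry u))
    (huT : ∀ s ∈ D, Periodic (fun x => u x s) T)
    (heq : ∀ x, ∀ s ∈ D,
      iteratedDeriv 2 (fun x' => u x' s) x + iteratedDeriv 2 (u x) s + q s * u x s = 0)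
    (hφ : ContDiff ℝ 2 φ) (hφT : Periodic φ T) (hφk : ∀ x, iteratedDeriv 2 φ x = -k • φ x) :
    IsSchrodingerSolutionOn (fun s => k - q s) (fun s => ∫ x in 0..T, u x s • φ x)
      (fun s => ∫ x in 0..T, deriv (u x) s • φ x) D where
  hasDerivWithinAt s _ := (hasDerivAt_integral_smul_of_contDiff
    (hu.of_le one_le_two) hφ.continuous 0 T s).hasDerivWithinAt
  hasDerivWithinAt_deriv s hs := by
    have hus : ContDiff ℝ 2 fun x => u x s := hu.comp (contDiff_prodMk_left s)
    have hgreen : ∫ x in 0..T, iteratedDeriv 2 (fun x => u x s) x • φ x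
        = -k • ∫ x in 0..T, u x s • φ x := by
      rw [integral_iteratedDeriv_two_smul_of_periodic hus hφ (huT s hs) hφT,
        ← intervalIntegral.integral_smul]
      simp only [hφk, smul_comm (-k)]
    have hpt : ∀ x, deriv (deriv (u x)) s • φ x
        = -q s • u x s • φ x - iteratedDeriv 2 (fun x' => u x' s) x • φ x := by
      intro x
      have huss : deriv (deriv (u x)) s = -q s * u x s - iteratedDeriv 2 (fun x' => u x' s) x := by
        rw [← iteratedDeriv_one, ← iteratedDeriv_succ']
        linear_combination heq x s hs
      rw [huss]
      module
    refine (hasDerivAt_integral_smul_of_contDiff (contDiff_uncurry_deriv hu one_add_one_eq_two.le)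
      hφ.continuous 0 T s).hasDerivWithinAt.congr_deriv ?_
    have := hus.continuous
    have := hus.continuous_iteratedDeriv 2 le_rfl
    have := hφ.continuous
    simp_rw [hpt]
    rw [intervalIntegral.integral_sub (Continuous.intervalIntegrable (by fun_prop) _ _)
      (Continuous.intervalIntegrable (by fun_prop) _ _), intervalIntegral.integral_smul, hgreen]
    module

end SeparationOfVariables

section Fourier

variable {T : ℝ}

lemma deriv_fourier (n : ℤ) : deriv (fun x : ℝ => fourier n (x : AddCircle T))
    = fun x : ℝ => 2 * Real.pi * Complex.I * n / T * fourier n (x : AddCircle T) :=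
  funext fun x => (hasDerivAt_fourier T n x).deriv

lemma iteratedDeriv_two_fourier (n : ℤ) (x : ℝ) :
    iteratedDeriv 2 (fun x : ℝ => fourier n (x : AddCircle T)) x
      = -(2 * Real.pi * n / T) ^ 2 • fourier n (x : AddCircle T) := by
  rw [iteratedDeriv_succ, iteratedDeriv_one, deriv_fourier, deriv_const_mul_field, deriv_fourier,
    Complex.real_smul]
  push_cast
  linear_combination (2 * Real.pi * n / T : ℂ) ^ 2 * fourier n (x : AddCircle T) * Complex.I_sq

lemma contDiff_fourier {m : WithTop ℕ∞} (n : ℤ) :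
    ContDiff ℝ m fun x : ℝ => fourier n (x : AddCircle T) := by
  have hcoe : ContDiff ℝ m Complex.ofReal := Complex.ofRealCLM.contDiff
  simp_rw [fourier_coe_apply]
  fun_prop

lemma eq_zero_of_fourierCoeff_eq_zero [Fact (0 < T)] {g : C(AddCircle T, ℂ)}
    (hg : ∀ n, fourierCoeff g n = 0) : g = 0 := by
  ext x
  have hsum := has_pointwise_sum_fourier_series_of_summable (f := g)
    (by simpa only [funext hg] using summable_zero) x
  simp only [hg, zero_smul] at hsum
  exact hsum.unique hasSum_zero

lemma eq_zero_of_integral_smul_fourier_eq_zero (hT : 0 < T) {f : ℝ → ℝ}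
    (hf : Continuous f) (hfT : Periodic f T)
    (hfn : ∀ n : ℤ, ∫ x in 0..T, f x • fourier n (x : AddCircle T) = 0) : f = 0 := by
  have : Fact (0 < T) := ⟨hT⟩
  have hfT' : Periodic (fun x => (f x : ℂ)) T := hfT.comp Complex.ofReal
  let g : C(AddCircle T, ℂ) :=
    ⟨hfT'.lift, continuous_coinduced_dom.2 (Complex.continuous_ofReal.comp hf)⟩
  have hcoeff : ∀ n, fourierCoeff g n = 0 := by
    intro n
    have hpt : ∀ x : ℝ, fourier (-n) (x : AddCircle T) • g x
        = f x • fourier (-n) (x : AddCircle T) := fun x => mul_comm _ _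
    rw [fourierCoeff_eq_intervalIntegral _ _ 0, zero_add]
    simp only [hpt, hfn, smul_zero]
  funext x
  have hx : (f x : ℂ) = 0 :=
    DFunLike.congr_fun (eq_zero_of_fourierCoeff_eq_zero hcoeff) (x : AddCircle T)
  exact_mod_cast hx

end Fourier

/-- Non-degeneracy of the Jacobi operator on the finite cylinder
`Ω_l = 𝕊¹ × [−l, l]` for `l tanh l ≠ 1`: the Dirichlet kernel of
`Δ + 2 sech²(s)` is trivial. -/
theorem jacobi_dirichlet_nondegeneracy
    (l : ℝ) (hl : 0 < l) (hne : l * Real.tanh l ≠ 1)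
    (u : ℝ → ℝ → ℝ)
    (hreg : ContDiff ℝ 2 (fun p : ℝ × ℝ => u p.1 p.2))
    (hper : ∀ x s : ℝ, u (x + 2 * Real.pi) s = u x s)
    (heq : ∀ x s : ℝ, -l ≤ s → s ≤ l →
      iteratedDeriv 2 (fun x' => u x' s) x
        + iteratedDeriv 2 (fun s' => u x s') s
        + 2 * ((Real.cosh s)⁻¹) ^ 2 * u x s = 0)
    (hbc : ∀ x : ℝ, u x l = 0 ∧ u x (-l) = 0) :
    ∀ x s : ℝ, -l ≤ s → s ≤ l → u x s = 0 := by
  intro x s hsl hsr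
  have hslice : Continuous fun x => u x s :=
    hreg.continuous.comp (by fun_prop : Continuous fun x : ℝ => (x, s))
  refine congrFun (eq_zero_of_integral_smul_fourier_eq_zero Real.two_pi_pos hslice
    (fun x => hper x s) fun n => ?_) x
  have hmode := isSchrodingerSolutionOn_integral_smul (D := Icc (-l) l) (T := 2 * Real.pi) hreg
    (fun s _ x => hper x s) (fun x s hs => heq x s hs.1 hs.2) (contDiff_fourier n)
    (Periodic.comp (AddCircle.coe_add_period (2 * Real.pi)) (fourier n))
    (iteratedDeriv_two_fourier n)
  rw [mul_div_cancel_left₀ _ Real.two_pi_pos.ne'] at hmode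
  exact (jacobi_int_mode_eq_zero hl hne n hmode (by simp [hbc]) (by simp [hbc]) ⟨hsl, hsr⟩ :)
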